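/- Let x ∈ B_n satisfy: x ∈ SSS(x), inf(x^i) = i·inf(x) and sup(x^i) = i·sup(x) for all i ≥ 1. If x^N is cyclically weighted for some N ≥ 1, then x itself is cyclically weighted. -/

import Mathlib

/-! Basic definitions for the braid group `B_n`, its Garside structure,
and related notions, following Garside/El-Rifai–Morton.
Generators are indexed by `i : Fin (n-1)`, with `σ i` corresponding to the
Artin generator `σ_{i+1}` (1-based) of the paper. -/

/-- The braid relations, as a set of elements of the free group. -/
def braidRels (n : ℕ) : Set (FreeGroup (Fin (n - 1))) :=
  { r | (∃ i j : Fin (n - 1), (i : ℕ) + 1 < (j : ℕ) ∧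
          r = .of i * .of j * (.of i)⁻¹ * (.of j)⁻¹) ∨
        (∃ i j : Fin (n - 1), (i : ℕ) + 1 = (j : ℕ) ∧
          r = (.of i * .of j * .of i) * (.of j * .of i * .of j)⁻¹) }

/-- The braid group on `n` strands. -/
abbrev BraidGroup (n : ℕ) := PresentedGroup (braidRels n)

namespace BraidGroup

variable {n : ℕ}

/-- The Artin generator `σ_{i+1}` (`i` is a 0-based index). -/
def σ (i : Fin (n - 1)) : BraidGroup n := PresentedGroup.of i

/-- `σ'` with a natural-number 0-based index (junk value `1` out of range). -/
def σ' (n : ℕ) (i : ℕ) : BraidGroup n := if h : i < n - 1 then σ ⟨i, h⟩ else 1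

/-- The fundamental braid `Δ = (σ_1⋯σ_{n-1})(σ_1⋯σ_{n-2})⋯(σ_1σ_2)σ_1`. -/
def Δ (n : ℕ) : BraidGroup n :=
  (((List.range (n - 1)).reverse).map
    (fun j => ((List.range (j + 1)).map (σ' n)).prod)).prod

/-- The monoid of positive braids inside `B_n` (the image of `B_n^+`). -/
def positives (n : ℕ) : Submonoid (BraidGroup n) :=
  Submonoid.closure (Set.range (σ (n := n)))

/-- `x` is a positive braid. -/
def IsPositive (x : BraidGroup n) : Prop := x ∈ positives n

/-- The prefix (left-divisibility) order: `x ≼ y` iff `x⁻¹y` is positive. -/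
def LeftDvd (x y : BraidGroup n) : Prop := ∃ p, IsPositive p ∧ x * p = y

/-- The right-divisibility order: `x ≼_R y` iff `y x⁻¹` is positive. -/
def RightDvd (x y : BraidGroup n) : Prop := ∃ p, IsPositive p ∧ p * x = y

/-- Permutation braids: positive left divisors of `Δ`. -/
def IsPermBraid (x : BraidGroup n) : Prop := IsPositive x ∧ LeftDvd x (Δ n)

/-- The involution `τ` of `B_n`, determined by `τ(σ_i) = σ_{n-i}`
(on 0-based indices: `i ↦ (n-2) - i`, i.e. `Fin.rev`). -/
noncomputable def τ (n : ℕ) : BraidGroup n →* BraidGroup n :=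
  Classical.epsilon (fun f => ∀ i : Fin (n - 1), f (σ i) = σ i.rev)

/-- `τ^u` for an integer `u`: equals `τ` for odd `u` and the identity for even `u`
(`τ` is an involution). -/
noncomputable def τpow (u : ℤ) (x : BraidGroup n) : BraidGroup n :=
  if Even u then x else τ n x

/-- The product `a⬝b` of a permutation braid `a` and a positive braid `b` is left
weighted iff `a* ∧ b = e`, i.e. no generator left-divides both `a* = a⁻¹Δ` and `b`. -/
def IsLeftWeighted (a b : BraidGroup n) : Prop :=
  ∀ i : Fin (n - 1), ¬ (LeftDvd (σ i) (a⁻¹ * Δ n) ∧ LeftDvd (σ i) b)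

/-- `Δ^u x_1 ⋯ x_k` is the left weighted form of `x`, where `L = [x_1, …, x_k]`. -/
def IsWeightedForm (u : ℤ) (L : List (BraidGroup n)) (x : BraidGroup n) : Prop :=
  (∀ a ∈ L, IsPermBraid a ∧ a ≠ 1 ∧ a ≠ Δ n) ∧
  L.Chain' IsLeftWeighted ∧
  x = (Δ n) ^ u * L.prod

/-- The left weighted form of a braid (chosen by choice; it exists and is unique). -/
noncomputable def wf (x : BraidGroup n) : ℤ × List (BraidGroup n) :=
  Classical.epsilon (fun p => IsWeightedForm p.1 p.2 x)

/-- The infimum `inf(x)`. -/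
noncomputable def binf (x : BraidGroup n) : ℤ := (wf x).1

/-- The canonical length `ℓ(x)`. -/
noncomputable def blen (x : BraidGroup n) : ℕ := (wf x).2.length

/-- The supremum `sup(x) = inf(x) + ℓ(x)`. -/
noncomputable def bsup (x : BraidGroup n) : ℤ := binf x + blen x

/-- The head `H(x)`: the first factor of the weighted form. -/
noncomputable def bhead (x : BraidGroup n) : BraidGroup n := ((wf x).2.head?).getD 1

/-- The tail `T(x)`: the last factor of the weighted form. -/
noncomputable def btail (x : BraidGroup n) : BraidGroup n := ((wf x).2.getLast?).getD 1

/-- Cycling: `c(x) = τ^u(H(x))⁻¹ · x · τ^u(H(x))`. -/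
noncomputable def cyc (x : BraidGroup n) : BraidGroup n :=
  (τpow (binf x) (bhead x))⁻¹ * x * τpow (binf x) (bhead x)

/-- Decycling: `d(x) = T(x) · x · T(x)⁻¹`. -/
noncomputable def decyc (x : BraidGroup n) : BraidGroup n :=
  btail x * x * (btail x)⁻¹

/-- `x` is cyclically weighted: `x_k ⬝ τ^u(x_1)` is left weighted. -/
noncomputable def IsCW (x : BraidGroup n) : Prop :=
  IsLeftWeighted (btail x) (τpow (binf x) (bhead x))

/-- `x` is weakly cyclically weighted: `H(x·τ^u(H(x))) = H(x)`. -/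
noncomputable def IsWCW (x : BraidGroup n) : Prop :=
  bhead (x * τpow (binf x) (bhead x)) = bhead x

/-- The summit set of `x`: conjugates with maximal infimum. -/
def SS (x : BraidGroup n) : Set (BraidGroup n) :=
  { y | IsConj x y ∧ ∀ z, IsConj x z → binf z ≤ binf y }

/-- The super summit set of `x`: conjugates with maximal infimum and minimal supremum. -/
def SSS (x : BraidGroup n) : Set (BraidGroup n) :=
  { y | y ∈ SS x ∧ ∀ z, IsConj x z → bsup y ≤ bsup z }

/-- The ultra summit set of `x`. -/
def USS (x : BraidGroup n) : Set (BraidGroup n) :=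
  { y ∈ SSS x | ∃ M : ℕ, 0 < M ∧ cyc^[M] y = y }

/-- The reduced super summit set of `x`. -/
def RSSS (x : BraidGroup n) : Set (BraidGroup n) :=
  { y | IsConj x y ∧ (∃ M : ℕ, 0 < M ∧ cyc^[M] y = y) ∧
        (∃ N : ℕ, 0 < N ∧ decyc^[N] y = y) }

/-- The left meet (greatest common left divisor) of two braids. -/
noncomputable def leftMeet (a b : BraidGroup n) : BraidGroup n :=
  Classical.epsilon (fun m => IsPositive m ∧ LeftDvd m a ∧ LeftDvd m b ∧
    ∀ c, IsPositive c → LeftDvd c a → LeftDvd c b → LeftDvd c m)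

/-- `x` is periodic: some positive power of `x` is a power of `Δ²`. -/
def IsPeriodic (x : BraidGroup n) : Prop :=
  ∃ m : ℕ, 0 < m ∧ ∃ k : ℤ, x ^ m = (Δ n) ^ (2 * k)

/-- The free generator `x_{i+1}` of `π₁` of the `n`-punctured disk (0-based index;
junk value `1` out of range). -/
def freeGen (n : ℕ) (i : ℕ) : FreeGroup (Fin n) := if h : i < n then .of ⟨i, h⟩ else 1

/-- The Artin action of `B_n` on the free group `F_n`:
`σ_i` sends `x_i ↦ x_i x_{i+1} x_i⁻¹`, `x_{i+1} ↦ x_i`, fixing the other generators. -/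
noncomputable def artin (n : ℕ) : BraidGroup n →* Monoid.End (FreeGroup (Fin n)) :=
  Classical.epsilon (fun f => ∀ i : Fin (n - 1),
    f (σ i) = FreeGroup.lift (fun j : Fin n =>
      if (j : ℕ) = (i : ℕ) then freeGen n i * freeGen n (i + 1) * (freeGen n i)⁻¹
      else if (j : ℕ) = (i : ℕ) + 1 then freeGen n i
      else FreeGroup.of j))

/-- The element of `π₁` represented by the round curve enclosing punctures
`I.1 + 1, …, I.2` (1-based): the product `x_{I.1+1} ⋯ x_{I.2}`. -/
def curveWord (n : ℕ) (I : ℕ × ℕ) : FreeGroup (Fin n) :=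
  ((List.range (I.2 - I.1)).map (fun t => freeGen n (I.1 + t))).prod

/-- An essential round curve: it encloses at least `2` and at most `n-1` punctures. -/
def EssentialCurve (n : ℕ) (I : ℕ × ℕ) : Prop :=
  I.1 + 2 ≤ I.2 ∧ I.2 ≤ n ∧ I.2 - I.1 ≤ n - 1

/-- Two round curves are disjoint (as curves): the intervals are disjoint or nested. -/
def CurvesCompatible (I J : ℕ × ℕ) : Prop :=
  I.2 ≤ J.1 ∨ J.2 ≤ I.1 ∨ (I.1 ≤ J.1 ∧ J.2 ≤ I.2) ∨ (J.1 ≤ I.1 ∧ I.2 ≤ J.2)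

/-- `x` is reducible: some conjugate of `x` preserves, up to conjugacy in `π₁`
(i.e. up to isotopy) and orientation, a nonempty system of disjoint essential
round curves. -/
noncomputable def IsReducible (x : BraidGroup n) : Prop :=
  ∃ y, IsConj x y ∧ ∃ F : Finset (ℕ × ℕ), F.Nonempty ∧
    (∀ I ∈ F, EssentialCurve n I) ∧
    (∀ I ∈ F, ∀ J ∈ F, I ≠ J → CurvesCompatible I J) ∧
    (∀ I ∈ F, ∃ J ∈ F, ∃ g : FreeGroup (Fin n),
      artin n y (curveWord n I) = g * curveWord n J * g⁻¹ ∨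
      artin n y (curveWord n I) = g * (curveWord n J)⁻¹ * g⁻¹)

/-- `x` is pseudo-Anosov: neither periodic nor reducible (Nielsen–Thurston). -/
noncomputable def IsPseudoAnosov (x : BraidGroup n) : Prop :=
  ¬ IsPeriodic x ∧ ¬ IsReducible x

/-- `σ_i` (1-based index `i`) left-divides the positive braid `w`, i.e. `i` is
 a descent of `w`. -/
def HasDescent (n : ℕ) (i : ℕ) (w : BraidGroup n) : Prop := LeftDvd (σ' n (i - 1)) w

/-- `D(n,k,i)`: the probability that a product of `k` independent uniformly random
permutation braids begins with the descent `i` (1-based), computed by counting. -/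
noncomputable def descentProb (n k : ℕ) (i : ℕ) : ℝ :=
  ({ f : Fin k → BraidGroup n | (∀ j, IsPermBraid (f j)) ∧
      HasDescent n i (List.ofFn f).prod }.ncard : ℝ) / (n.factorial ^ k : ℝ)

/-- `D(n,k)`: the expected number of descents of a product of `k` random
permutation braids. -/
noncomputable def descentExp (n k : ℕ) : ℝ :=
  ∑ i ∈ Finset.Icc 1 (n - 1), descentProb n k i

/-- `d(n,k) = D(n,k) - D(n,k-1)`: the expected number of descents contributed by
the `k`-th factor. -/
noncomputable def descentInc (n k : ℕ) : ℝ := descentExp n k - descentExp n (k - 1)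


/-! ### The positive braid monoid -/

/-- Adjacent indices. -/
def bmAdj {m : ℕ} (i j : Fin m) : Prop := (i : ℕ) + 1 = j ∨ (j : ℕ) + 1 = i

instance bmAdjDec {m : ℕ} (i j : Fin m) : Decidable (bmAdj i j) := by
  unfold bmAdj; infer_instance

/-- Right complement of two generators, as a word. -/
def bmCompW {m : ℕ} (i j : Fin m) : FreeMonoid (Fin m) :=
  if i = j then 1 else if bmAdj i j then FreeMonoid.of j * FreeMonoid.of i else FreeMonoid.of j

/-- Relations of the positive braid monoid. -/
def bmRels (m : ℕ) (a b : FreeMonoid (Fin m)) : Prop :=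
  ∃ i j : Fin m, a = FreeMonoid.of i * bmCompW i j ∧ b = FreeMonoid.of j * bmCompW j i

/-- The positive braid monoid with `m` generators. -/
abbrev BM (m : ℕ) := PresentedMonoid (bmRels m)

/-- generators -/
def bs {m : ℕ} (i : Fin m) : BM m := PresentedMonoid.of (bmRels m) i

/-- complements -/
def bc {m : ℕ} (i j : Fin m) : BM m := PresentedMonoid.mk (bmRels m) (bmCompW i j)

section monoidpart
variable {m : ℕ}

lemma bmAdj_symm {i j : Fin m} (h : bmAdj i j) : bmAdj j i := Or.symm h

lemma bmAdj_ne {i j : Fin m} (h : bmAdj i j) : i ≠ j := by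
  rintro rfl; unfold bmAdj at h; omega

lemma bc_self (i : Fin m) : bc i i = 1 := by simp [bc, bmCompW]

lemma bc_adj {i j : Fin m} (h : bmAdj i j) : bc i j = bs j * bs i := by
  simp [bc, bmCompW, h, bmAdj_ne h, bs, PresentedMonoid.of]

lemma bc_far {i j : Fin m} (h : ¬ bmAdj i j) (h' : i ≠ j) : bc i j = bs j := by
  simp [bc, bmCompW, h, h', bs, PresentedMonoid.of]

lemma bs_bc (i j : Fin m) : bs i * bc i j = bs j * bc j i := by
  have := PresentedMonoid.mk_eq_mk_of_rel (rels := bmRels m) ⟨i, j, rfl, rfl⟩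
  rw [map_mul, map_mul] at this
  exact this

lemma bs_comm {i j : Fin m} (h : ¬ bmAdj i j) : bs i * bs j = bs j * bs i := by
  by_cases h' : i = j
  · rw [h']
  · have := bs_bc i j
    rwa [bc_far h h', bc_far (fun k => h (bmAdj_symm k)) (Ne.symm h')] at this

lemma bs_braid {i j : Fin m} (h : bmAdj i j) : bs i * (bs j * bs i) = bs j * (bs i * bs j) := by
  have := bs_bc i j
  rwa [bc_adj h, bc_adj (bmAdj_symm h)] at this

lemma bs_comm' {i j : Fin m} (h : ¬ bmAdj i j) (z : BM m) :
    bs i * (bs j * z) = bs j * (bs i * z) := by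
  rw [← mul_assoc, bs_comm h, mul_assoc]

lemma bs_braid' {i j : Fin m} (h : bmAdj i j) (z : BM m) :
    bs i * (bs j * (bs i * z)) = bs j * (bs i * (bs j * z)) := by
  have := congrArg (· * z) (bs_braid h)
  simpa only [mul_assoc] using this

/-- universal property -/
def bmLift {G : Type*} [Monoid G] (f : Fin m → G)
    (h1 : ∀ i j, bmAdj i j → f i * (f j * f i) = f j * (f i * f j))
    (h2 : ∀ i j, ¬ bmAdj i j → f i * f j = f j * f i) : BM m →* G :=
  PresentedMonoid.lift f (by
    rintro a b ⟨i, j, rfl, rfl⟩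
    by_cases h : i = j
    · subst h; rfl
    by_cases h' : bmAdj i j
    · simpa [bmCompW, h, h', bmAdj_symm h', Ne.symm h] using h1 i j h'
    · have : ¬ bmAdj j i := fun k => h' (bmAdj_symm k)
      simpa [bmCompW, h, h', this, Ne.symm h] using h2 i j h')

lemma bmLift_bs {G : Type*} [Monoid G] (f : Fin m → G) (h1) (h2) (i : Fin m) :
    bmLift f h1 h2 (bs i) = f i := rfl

/-- length -/
def blen0 : BM m →* Multiplicative ℕ :=
  bmLift (fun _ => Multiplicative.ofAdd 1) (fun _ _ _ => rfl) (fun _ _ _ => rfl)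

/-- length -/
def bl (x : BM m) : ℕ := Multiplicative.toAdd (blen0 x)

lemma bl_mul (x y : BM m) : bl (x * y) = bl x + bl y := by simp [bl]
lemma bl_one : bl (1 : BM m) = 0 := by simp [bl]
lemma bl_bs (i : Fin m) : bl (bs i) = 1 := rfl

lemma bm_cases (x : BM m) : x = 1 ∨ ∃ i y, x = bs i * y := by
  obtain ⟨a, rfl⟩ := PresentedMonoid.surjective_mk x
  induction a with
  | one => left; exact map_one _
  | of i => right; exact ⟨i, 1, by rw [mul_one]; rfl⟩
  | mul a b ha hb =>
    rw [map_mul]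
    rcases ha with ha | ⟨i, y, hy⟩
    · rw [ha, one_mul]; exact hb
    · right; exact ⟨i, y * PresentedMonoid.mk _ b, by rw [hy, mul_assoc]⟩

lemma bl_eq_zero {x : BM m} (h : bl x = 0) : x = 1 := by
  rcases bm_cases x with h' | ⟨i, y, rfl⟩
  · exact h'
  · rw [bl_mul, bl_bs] at h; omega

/-- Key statement up to length `L`. -/
def bmKey (m L : ℕ) : Prop := ∀ (i j : Fin m) (X Y : BM m), bs i * X = bs j * Y →
  bl (bs i * X) ≤ L → ∃ Z, X = bc i j * Z ∧ Y = bc j i * Z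

lemma bm_trans {L : ℕ} (hK : bmKey m L) (i k j : Fin m) (Z Z' : BM m)
    (h : bc k i * Z = bc k j * Z') (hl : bl (bc k i * Z) ≤ L) :
    ∃ W, bc i k * Z = bc i j * W ∧ bc j k * Z' = bc j i * W := by
  have canc : ∀ (a : Fin m) (X Y : BM m), bs a * X = bs a * Y → bl (bs a * X) ≤ L → X = Y := by
    intro a X Y h1 h2
    obtain ⟨Z, rfl, rfl⟩ := hK a a X Y h1 h2
    rfl
  by_cases hik : i = k
  · subst hik
    rw [bc_self, one_mul] at h
    exact ⟨Z', by rw [bc_self, one_mul, h], rfl⟩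
  by_cases hjk : j = k
  · subst hjk
    rw [bc_self, one_mul] at h
    exact ⟨Z, rfl, by rw [bc_self, one_mul, h]⟩
  by_cases hij : i = j
  · subst hij
    have : Z = Z' := by
      by_cases a : bmAdj k i
      · simp only [bc_adj a, mul_assoc] at h hl
        refine canc _ _ _ (canc _ _ _ h hl) ?_
        rw [bl_mul] at hl; omega
      · rw [bc_far a (Ne.symm hik)] at h hl
        exact canc _ _ _ h hl
    subst this
    exact ⟨bc i k * Z, by rw [bc_self, one_mul], by rw [bc_self, one_mul]⟩
  have key := hK
  unfold bmKey at hK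
  have nki := Ne.symm hik
  have nkj := Ne.symm hjk
  have nji := Ne.symm hij
  by_cases aki : bmAdj k i
  · have aik := bmAdj_symm aki
    by_cases akj : bmAdj k j
    · have ajk := bmAdj_symm akj
      have aij : ¬ bmAdj i j := by unfold bmAdj at *; omega
      have aji : ¬ bmAdj j i := fun q => aij (bmAdj_symm q)
      simp only [bc_adj aki, bc_adj akj, bc_adj aik, bc_adj ajk, bc_far aij hij, bc_far aji nji, mul_assoc] at h hl ⊢
      obtain ⟨T, h1, h2⟩ := hK _ _ _ _ h hl
      rw [bc_far aij hij] at h1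
      rw [bc_far aji nji] at h2
      have e1 := congrArg bl h
      have e2 := congrArg bl h1
      have e3 := congrArg bl h2
      simp only [bl_mul, bl_bs] at hl e1 e2 e3
      obtain ⟨A, h3, h4⟩ := hK _ _ _ _ h1 (by simp only [bl_mul, bl_bs]; omega)
      obtain ⟨B, h5, h6⟩ := hK _ _ _ _ h2 (by simp only [bl_mul, bl_bs]; omega)
      simp only [bc_adj aki, bc_adj akj, bc_adj aik, bc_adj ajk, mul_assoc] at h3 h4 h5 h6
      have e4 := congrArg bl h4
      simp only [bl_mul, bl_bs] at e4
      have h7 : bs j * A = bs i * B := canc _ _ _ (h4.symm.trans h6) (by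
        simp only [bl_mul, bl_bs]; omega)
      obtain ⟨C, h8, h9⟩ := hK _ _ _ _ h7 (by simp only [bl_mul, bl_bs]; omega)
      rw [bc_far aji nji] at h8
      rw [bc_far aij hij] at h9
      subst h3 h5 h8 h9
      refine ⟨bs k * (bs j * (bs i * (bs k * C))), ?_, ?_⟩
      · rw [bs_comm' aij, bs_braid' aik, bs_braid' akj]
      · rw [bs_comm' aji, bs_braid' ajk, bs_braid' aki, bs_comm' aij]
    · have ajk : ¬ bmAdj j k := fun q => akj (bmAdj_symm q)
      by_cases aij : bmAdj i j
      · have aji := bmAdj_symm aij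
        simp only [bc_adj aki, bc_far akj nkj, bc_adj aik, bc_far ajk hjk, bc_adj aij, bc_adj aji, mul_assoc] at h hl ⊢
        obtain ⟨A, h1, h2⟩ := hK _ _ _ _ h hl
        simp only [bc_adj aij, bc_adj aji, mul_assoc] at h1 h2
        have e2 := congrArg bl h1
        simp only [bl_mul, bl_bs] at hl e2
        obtain ⟨B, h3, h4⟩ := hK _ _ _ _ h1 (by simp only [bl_mul, bl_bs]; omega)
        rw [bc_far akj nkj] at h3
        rw [bc_far ajk hjk] at h4
        obtain ⟨C, h5, h6⟩ := hK _ _ _ _ h4 (by simp only [bl_mul, bl_bs]; omega)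
        simp only [bc_adj aki, bc_adj aik, mul_assoc] at h5 h6
        subst h2 h3 h5 h6
        refine ⟨bs k * (bs i * (bs j * C)), ?_, ?_⟩
        · rw [bs_braid' aij, bs_comm' akj, bs_comm' ajk C, bs_braid' aki]
        · rw [bs_comm' ajk (bs i * (bs j * C)), bs_braid' aji C, bs_braid' aik (bs j * (bs i * C)),
            bs_comm' akj (bs i * C)]
      · have aji : ¬ bmAdj j i := fun q => aij (bmAdj_symm q)
        simp only [bc_adj aki, bc_far akj nkj, bc_adj aik, bc_far ajk hjk, bc_far aij hij, bc_far aji nji, mul_assoc] at h hl ⊢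
        obtain ⟨U, h1, h2⟩ := hK _ _ _ _ h hl
        simp only [bc_far aij hij, bc_far aji nji] at h1 h2
        have e2 := congrArg bl h1
        simp only [bl_mul, bl_bs] at hl e2
        obtain ⟨T, h3, h4⟩ := hK _ _ _ _ h1 (by simp only [bl_mul, bl_bs]; omega)
        rw [bc_far akj nkj] at h3
        rw [bc_far ajk hjk] at h4
        subst h2 h3 h4
        refine ⟨bs k * (bs i * T), ?_, ?_⟩
        · rw [bs_comm' aij, bs_comm' akj]
        · rw [bs_braid' aki]
  · have aik : ¬ bmAdj i k := fun q => aki (bmAdj_symm q)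
    by_cases akj : bmAdj k j
    · have ajk := bmAdj_symm akj
      by_cases aij : bmAdj i j
      · have aji := bmAdj_symm aij
        simp only [bc_adj akj, bc_far aki nki, bc_adj ajk, bc_far aik hik, bc_adj aij, bc_adj aji, mul_assoc] at h hl ⊢
        obtain ⟨A, h2, h1⟩ := hK _ _ _ _ h hl
        simp only [bc_adj aij, bc_adj aji, mul_assoc] at h1 h2
        have e1 := congrArg bl h
        have e2 := congrArg bl h1
        simp only [bl_mul, bl_bs] at hl e1 e2
        obtain ⟨B, h3, h4⟩ := hK _ _ _ _ h1 (by simp only [bl_mul, bl_bs]; omega)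
        rw [bc_far aki nki] at h3
        rw [bc_far aik hik] at h4
        obtain ⟨C, h5, h6⟩ := hK _ _ _ _ h4 (by simp only [bl_mul, bl_bs]; omega)
        simp only [bc_adj akj, bc_adj ajk, mul_assoc] at h5 h6
        subst h2 h3 h5 h6
        refine ⟨bs k * (bs j * (bs i * C)), ?_, ?_⟩
        · rw [bs_comm' aik (bs j * (bs i * C)), bs_braid' aij C, bs_braid' ajk (bs i * (bs j * C)),
            bs_comm' aki (bs j * C)]
        · rw [bs_braid' aji, bs_comm' aki, bs_comm' aik C, bs_braid' akj]
      · have aji : ¬ bmAdj j i := fun q => aij (bmAdj_symm q)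
        simp only [bc_adj akj, bc_far aki nki, bc_adj ajk, bc_far aik hik, bc_far aij hij, bc_far aji nji, mul_assoc] at h hl ⊢
        obtain ⟨U, h2, h1⟩ := hK _ _ _ _ h hl
        simp only [bc_far aij hij, bc_far aji nji] at h1 h2
        have e1 := congrArg bl h
        have e2 := congrArg bl h1
        simp only [bl_mul, bl_bs] at hl e1 e2
        obtain ⟨T, h3, h4⟩ := hK _ _ _ _ h1 (by simp only [bl_mul, bl_bs]; omega)
        rw [bc_far aki nki] at h3
        rw [bc_far aik hik] at h4
        subst h2 h3 h4
        refine ⟨bs k * (bs j * T), ?_, ?_⟩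
        · rw [bs_braid' akj]
        · rw [bs_comm' aji, bs_comm' aki]
    · have ajk : ¬ bmAdj j k := fun q => akj (bmAdj_symm q)
      rw [bc_far aki nki, bc_far akj nkj] at h
      rw [bc_far aki nki] at hl
      obtain ⟨W, h1, h2⟩ := hK _ _ _ _ h hl
      subst h1 h2
      rw [bc_far aik hik, bc_far ajk hjk]
      refine ⟨bs k * W, ?_, ?_⟩
      · by_cases aij : bmAdj i j
        · simp only [bc_adj aij, mul_assoc]
          rw [bs_comm' akj, bs_comm' aki]
        · rw [bc_far aij hij, bs_comm' akj]
      · by_cases aij : bmAdj j i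
        · simp only [bc_adj aij, mul_assoc]
          rw [bs_comm' aki, bs_comm' akj]
        · rw [bc_far aij nji, bs_comm' aki]
lemma bm_step {L : ℕ} (hK : bmKey m L) (w w' : FreeMonoid (Fin m))
    (h : ConGen.Rel (bmRels m) w w') :
    bl (PresentedMonoid.mk (bmRels m) w) ≤ L + 1 →
    (w = 1 ∧ w' = 1) ∨ ∃ i j X Y, ∃ Z : BM m, w = FreeMonoid.of i * X ∧ w' = FreeMonoid.of j * Y ∧
      PresentedMonoid.mk (bmRels m) X = bc i j * Z ∧
      PresentedMonoid.mk (bmRels m) Y = bc j i * Z := by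
  have eqm : ∀ {a b : FreeMonoid (Fin m)}, ConGen.Rel (bmRels m) a b →
      PresentedMonoid.mk (bmRels m) a = PresentedMonoid.mk (bmRels m) b :=
    fun h => PresentedMonoid.mk_eq_mk_iff.2 h
  have bof : ∀ i : Fin m, PresentedMonoid.mk (bmRels m) (FreeMonoid.of i) = bs i := fun _ => rfl
  induction h with
  | of x y h =>
    intro _
    obtain ⟨i, j, rfl, rfl⟩ := h
    right
    exact ⟨i, j, _, _, 1, rfl, rfl, by rw [mul_one]; rfl, by rw [mul_one]; rfl⟩
  | refl x =>
    intro _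
    induction x using FreeMonoid.casesOn with
    | one => left; exact ⟨rfl, rfl⟩
    | of_mul i X =>
      right
      exact ⟨i, i, X, X, PresentedMonoid.mk _ X, rfl, rfl, by rw [bc_self, one_mul],
        by rw [bc_self, one_mul]⟩
  | symm h ih =>
    intro hl
    rw [← eqm h] at hl
    rcases ih hl with ⟨rfl, rfl⟩ | ⟨i, j, X, Y, Z, h1, h2, h3, h4⟩
    · left; exact ⟨rfl, rfl⟩
    · right; exact ⟨j, i, Y, X, Z, h2, h1, h4, h3⟩
  | @trans x y z h1 h2 ih1 ih2 =>
    intro hl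
    have hl2 := hl
    rw [eqm h1] at hl2
    rcases ih1 hl with ⟨rfl, rfl⟩ | ⟨i, k, X, Y, Z, a1, a2, a3, a4⟩
    · exact ih2 hl2
    rcases ih2 hl2 with ⟨rfl, rfl⟩ | ⟨k', j, Y', V, Z', b1, b2, b3, b4⟩
    · right; exact ⟨i, k, X, Y, Z, a1, a2, a3, a4⟩
    have he : FreeMonoid.of k * Y = FreeMonoid.of k' * Y' := a2.symm.trans b1
    have he' := congrArg FreeMonoid.toList he
    simp only [FreeMonoid.toList_mul, FreeMonoid.toList_of, List.singleton_append,
      List.cons.injEq] at he'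
    obtain ⟨rfl, e2⟩ := he'
    have e3 : Y = Y' := FreeMonoid.toList.injective e2
    subst e3
    obtain ⟨W, c1, c2⟩ := bm_trans hK i k j Z Z' (a4.symm.trans b3) (by
      rw [← a4]; rw [a2, map_mul, bl_mul, bof, bl_bs] at hl2; omega)
    right
    exact ⟨i, j, X, V, W, a1, b2, a3.trans c1, b4.trans c2⟩
  | @mul w x y z h1 h2 ih1 ih2 =>
    intro hl
    rw [map_mul, bl_mul] at hl
    rcases ih1 (by omega) with ⟨rfl, rfl⟩ | ⟨i, k, X, Y, Z, a1, a2, a3, a4⟩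
    · rw [one_mul, one_mul]; exact ih2 (by omega)
    · right
      refine ⟨i, k, X * y, Y * z, Z * PresentedMonoid.mk _ y, ?_, ?_, ?_, ?_⟩
      · rw [a1, mul_assoc]
      · rw [a2, mul_assoc]
      · rw [map_mul, a3, mul_assoc]
      · rw [map_mul, a4, eqm h2, mul_assoc]

lemma bm_key_all (L : ℕ) : bmKey m L := by
  induction L with
  | zero =>
    intro i j X Y _ h
    rw [bl_mul, bl_bs] at h; omega
  | succ L ih =>
    intro i j X Y h hl
    obtain ⟨X, rfl⟩ := PresentedMonoid.surjective_mk X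
    obtain ⟨Y, rfl⟩ := PresentedMonoid.surjective_mk Y
    have h' : PresentedMonoid.mk (bmRels m) (FreeMonoid.of i * X) =
        PresentedMonoid.mk (bmRels m) (FreeMonoid.of j * Y) := by
      rw [map_mul, map_mul]; exact h
    rcases bm_step ih _ _ (PresentedMonoid.mk_eq_mk_iff.1 h')
      (by rw [map_mul]; exact hl) with ⟨h1, _⟩ | ⟨i', j', X', Y', Z, h1, h2, h3, h4⟩
    · have := congrArg FreeMonoid.toList h1
      simp at this
    · have h1 := congrArg FreeMonoid.toList h1
      have h2 := congrArg FreeMonoid.toList h2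
      simp only [FreeMonoid.toList_mul, FreeMonoid.toList_of, List.singleton_append,
        List.cons.injEq] at h1 h2
      obtain ⟨rfl, e1⟩ := h1
      obtain ⟨rfl, e2⟩ := h2
      have e1 := FreeMonoid.toList.injective e1
      have e2 := FreeMonoid.toList.injective e2
      subst e1 e2
      exact ⟨Z, h3, h4⟩

lemma bm_key {i j : Fin m} {X Y : BM m} (h : bs i * X = bs j * Y) :
    ∃ Z, X = bc i j * Z ∧ Y = bc j i * Z := bm_key_all _ i j X Y h le_rfl

lemma bm_cancel_gen {i : Fin m} {X Y : BM m} (h : bs i * X = bs i * Y) : X = Y := by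
  obtain ⟨Z, rfl, rfl⟩ := bm_key h
  rfl

lemma bm_cancel (a : BM m) : ∀ {X Y : BM m}, a * X = a * Y → X = Y := by
  obtain ⟨a, rfl⟩ := PresentedMonoid.surjective_mk a
  induction a with
  | one => intro X Y h; simpa using h
  | of i => intro X Y h; exact bm_cancel_gen h
  | mul a b ha hb =>
    intro X Y h
    rw [map_mul, mul_assoc, mul_assoc] at h
    exact hb (ha h)

lemma bm_dvd_cancel (a : BM m) {X Y : BM m} (h : a * X ∣ a * Y) : X ∣ Y := by
  obtain ⟨c, hc⟩ := h
  exact ⟨c, bm_cancel a (by rw [hc, mul_assoc])⟩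

/-- Least common multiples, in a weak form. -/
lemma bm_lcm (L : ℕ) : ∀ (a e p q : BM m), bl p ≤ L → a ∣ p → a ∣ q → e ∣ p → e ∣ q →
    ∃ l, a ∣ l ∧ e ∣ l ∧ l ∣ p ∧ l ∣ q := by
  induction L with
  | zero =>
    intro a e p q hl h1 h2 h3 h4
    have hp : p = 1 := bl_eq_zero (by omega)
    subst hp
    exact ⟨1, h1, h3, dvd_rfl, one_dvd _⟩
  | succ L ih =>
    intro a e p q hl h1 h2 h3 h4
    rcases bm_cases a with rfl | ⟨i, a, rfl⟩
    · exact ⟨e, one_dvd _, dvd_rfl, h3, h4⟩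
    rcases bm_cases e with rfl | ⟨j, e, rfl⟩
    · exact ⟨_, dvd_rfl, one_dvd _, h1, h2⟩
    obtain ⟨p1, hp1⟩ := h1
    obtain ⟨q1, hq1⟩ := h2
    obtain ⟨p2, hp2⟩ := h3
    obtain ⟨q2, hq2⟩ := h4
    rw [mul_assoc] at hp1 hq1 hp2 hq2
    obtain ⟨Z, z1, z2⟩ := bm_key (hp1.symm.trans hp2)
    obtain ⟨Z', z1', z2'⟩ := bm_key (hq1.symm.trans hq2)
    have hlp : bl p = 1 + bl (a * p1) := by rw [hp1, bl_mul, bl_bs]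
    have hlp2 : bl p = 1 + bl (e * p2) := by rw [hp2, bl_mul, bl_bs]
    obtain ⟨l1, x1, ⟨t1, rfl⟩, x3, x4⟩ := ih a (bc i j) (a * p1) (a * q1) (by omega)
      (Dvd.intro _ rfl) (Dvd.intro _ rfl) ⟨Z, z1⟩ ⟨Z', z1'⟩
    obtain ⟨l2, y1, ⟨t2, rfl⟩, y3, y4⟩ := ih e (bc j i) (e * p2) (e * q2) (by omega)
      (Dvd.intro _ rfl) (Dvd.intro _ rfl) ⟨Z, z2⟩ ⟨Z', z2'⟩
    rw [z1] at x3
    rw [z1'] at x4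
    rw [z2] at y3
    rw [z2'] at y4
    obtain ⟨l3, w1, w2, w3, w4⟩ := ih t1 t2 Z Z' (by rw [z1, bl_mul] at hlp; omega)
      (bm_dvd_cancel _ x3) (bm_dvd_cancel _ x4) (bm_dvd_cancel _ y3) (bm_dvd_cancel _ y4)
    refine ⟨bs i * (bc i j * l3), ?_, ?_, ?_, ?_⟩
    · exact mul_dvd_mul_left _ (x1.trans (mul_dvd_mul_left _ w1))
    · rw [← mul_assoc, bs_bc, mul_assoc]
      exact mul_dvd_mul_left _ (y1.trans (mul_dvd_mul_left _ w2))
    · rw [hp1, z1]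
      exact mul_dvd_mul_left _ (mul_dvd_mul_left _ w3)
    · rw [hq1, z1']
      exact mul_dvd_mul_left _ (mul_dvd_mul_left _ w4)

/-- Head lemma in the monoid. -/
lemma bm_head (a a' b : BM m) (i : Fin m) (h1 : bs i ∣ a * a') (h2 : bs i ∣ a * b)
    (hw : ∀ j, ¬ (bs j ∣ a' ∧ bs j ∣ b)) : bs i ∣ a := by
  obtain ⟨l, ⟨r, rfl⟩, k2, k3, k4⟩ := bm_lcm _ a (bs i) (a * a') (a * b) le_rfl
    (Dvd.intro _ rfl) (Dvd.intro _ rfl) h1 h2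
  rcases bm_cases r with rfl | ⟨j, r, rfl⟩
  · simpa using k2
  · exact absurd ⟨(Dvd.intro _ rfl).trans (bm_dvd_cancel _ k3),
      (Dvd.intro _ rfl).trans (bm_dvd_cancel _ k4)⟩ (hw j)

end monoidpart
/-! ### The fundamental element -/

section deltapart

/-- `A_k = s_0 ⋯ s_{k-1}` -/
def gA {G : Type*} [Monoid G] (s : ℕ → G) (k : ℕ) : G := ((List.range k).map s).prod

/-- `Δ_k` -/
def gD {G : Type*} [Monoid G] (s : ℕ → G) (k : ℕ) : G :=
  (((List.range k).reverse).map (fun j => gA s (j + 1))).prod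

/-- `B_k = s_{k-1} ⋯ s_0` -/
def gB {G : Type*} [Monoid G] (s : ℕ → G) : ℕ → G
  | 0 => 1
  | k + 1 => s k * gB s k

variable {G : Type*} [Monoid G] (s : ℕ → G)

lemma gA_zero : gA s 0 = 1 := by simp [gA]
lemma gA_succ (k : ℕ) : gA s (k + 1) = gA s k * s k := by simp [gA, List.range_succ]
lemma gD_zero : gD s 0 = 1 := by simp [gD]
lemma gD_succ (k : ℕ) : gD s (k + 1) = gA s (k + 1) * gD s k := by simp [gD, List.range_succ]

variable (m : ℕ)

/-- braid relations for natural indices -/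
structure BrRel : Prop where
  far : ∀ i j, i + 1 < j → j < m → s i * s j = s j * s i
  adj : ∀ i, i + 1 < m → s i * (s (i + 1) * s i) = s (i + 1) * (s i * s (i + 1))

variable {s m}

lemma gA_far (h : BrRel s m) (k j : ℕ) (hk : k < j) (hj : j < m) : gA s k * s j = s j * gA s k := by
  induction k with
  | zero => simp [gA_zero]
  | succ k ih =>
    rw [gA_succ, mul_assoc, h.far k j hk hj, ← mul_assoc, ih (by omega), mul_assoc]

lemma gB_far (h : BrRel s m) (k j : ℕ) (hk : k < j) (hj : j < m) : gB s k * s j = s j * gB s k := by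
  induction k with
  | zero => simp [gB]
  | succ k ih =>
    rw [gB, mul_assoc, ih (by omega), ← mul_assoc, h.far k j hk hj, mul_assoc]

lemma gD_far (h : BrRel s m) (k j : ℕ) (hk : k < j) (hj : j < m) : gD s k * s j = s j * gD s k := by
  induction k with
  | zero => simp [gD_zero]
  | succ k ih =>
    rw [gD_succ, mul_assoc, ih (by omega), ← mul_assoc, gA_far h _ j hk hj, mul_assoc]

lemma gA_shift (h : BrRel s m) (k i : ℕ) (hi : i + 1 < k) (hk : k ≤ m) : s (i + 1) * gA s k = gA s k * s i := by
  induction k with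
  | zero => omega
  | succ k ih =>
    rw [gA_succ]
    by_cases hik : i + 1 < k
    · rw [← mul_assoc, ih hik (by omega), mul_assoc, h.far i k hik (by omega), mul_assoc]
    · obtain rfl : k = i + 1 := by omega
      rw [gA_succ, ← mul_assoc, ← mul_assoc, ← gA_far h i (i + 1) (by omega) (by omega)]
      simp only [mul_assoc]
      rw [h.adj i (by omega)]

lemma gB_shift (h : BrRel s m) (k i : ℕ) (hi : i + 1 < k) (hk : k ≤ m) : s i * gB s k = gB s k * s (i + 1) := by
  induction k with
  | zero => omega
  | succ k ih =>
    rw [gB]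
    by_cases hik : i + 1 < k
    · rw [← mul_assoc, h.far i k hik (by omega), mul_assoc, ih hik (by omega), mul_assoc]
    · obtain rfl : k = i + 1 := by omega
      rw [gB, mul_assoc, mul_assoc, gB_far h i (i + 1) (by omega) (by omega)]
      have := congrArg (· * gB s i) (h.adj i (by omega))
      simpa only [mul_assoc] using this

lemma gD_succ' (h : BrRel s m) (k : ℕ) (hk : k + 1 ≤ m) : gD s (k + 1) = gD s k * gB s (k + 1) := by
  induction k with
  | zero => simp [gD_succ, gD_zero, gA_succ, gA_zero, gB]
  | succ k ih =>
    conv_lhs => rw [gD_succ, ih (by omega), gA_succ, mul_assoc, ← mul_assoc (s (k + 1)),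
      ← gD_far h k (k + 1) (by omega) (by omega)]
    rw [gD_succ]
    simp only [mul_assoc, gB]

lemma gD_conj (h : BrRel s m) (k i : ℕ) (hi : i < k) (hk : k ≤ m) : s i * gD s k = gD s k * s (k - 1 - i) := by
  induction k generalizing i with
  | zero => omega
  | succ k ih =>
    rcases i with _ | i
    · rcases k with _ | k
      · simp [gD_succ, gD_zero, gA_succ, gA_zero]
      · rw [gD_succ' h (k + 1) hk, ← mul_assoc, ih 0 (by omega) (by omega), mul_assoc]
        have e : k + 1 - 1 - 0 = k := by omega
        have e' : k + 1 + 1 - 1 - 0 = k + 1 := by omega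
        rw [e, e', gB_shift h _ _ (by omega) hk, mul_assoc]
    · rw [gD_succ, ← mul_assoc, gA_shift h _ _ (by omega) hk, mul_assoc, ih i (by omega) (by omega),
        mul_assoc]
      have e : k - 1 - i = k + 1 - 1 - (i + 1) := by omega
      rw [e]

lemma gA_dvd (k : ℕ) : s 0 ∣ gA s (k + 1) := by
  induction k with
  | zero => simp [gA_succ, gA_zero]
  | succ k ih => rw [gA_succ]; exact Dvd.dvd.mul_right ih _

lemma gD_dvd (h : BrRel s m) (k i : ℕ) (hi : i < k) (hk : k ≤ m) : s i ∣ gD s k := by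
  induction k generalizing i with
  | zero => omega
  | succ k ih =>
    rw [gD_succ]
    rcases i with _ | i
    · exact Dvd.dvd.mul_right (gA_dvd k) _
    · obtain ⟨c, hc⟩ := ih i (by omega) (by omega)
      rw [hc, ← mul_assoc, ← gA_shift h _ _ (by omega) hk, mul_assoc]
      exact Dvd.intro _ rfl

end deltapart
/-! ### Embedding of the monoid -/

section embed

/-- generators with natural index -/
def bs' (m : ℕ) (i : ℕ) : BM m := if h : i < m then bs ⟨i, h⟩ else 1

lemma bs'_brRel (m : ℕ) : BrRel (bs' m) m where
  far i j h hj := by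
    have hi : i < m := by omega
    simp only [bs', hi, hj, dif_pos]
    apply bs_comm
    unfold bmAdj; simp only; omega
  adj i h := by
    have hi : i < m := by omega
    simp only [bs', hi, h, dif_pos]
    apply bs_braid
    left; rfl

/-- The fundamental element of the monoid -/
def bD (m : ℕ) : BM m := gD (bs' m) m

lemma bs_bD {m : ℕ} (i : Fin m) : bs i * bD m = bD m * bs i.rev := by
  have := gD_conj (bs'_brRel m) m i i.2 le_rfl
  have h1 : m - 1 - (i : ℕ) < m := by omega
  simp only [bs', i.2, h1, dif_pos] at this
  have e : i.rev = ⟨m - 1 - (i : ℕ), h1⟩ := by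
    ext; simp [Fin.val_rev]; omega
  rw [e]; exact this

lemma bs_dvd_bD {m : ℕ} (i : Fin m) : bs i ∣ bD m := by
  have := gD_dvd (bs'_brRel m) m i i.2 le_rfl
  simp only [bs', i.2, dif_pos] at this
  exact this

lemma bm_comm_DD {m : ℕ} (X : BM m) : (bD m * bD m) * X = X * (bD m * bD m) := by
  obtain ⟨X, rfl⟩ := PresentedMonoid.surjective_mk X
  induction X with
  | one => simp
  | of i =>
    change _ * bs i = bs i * _
    rw [← mul_assoc (bs i), bs_bD, mul_assoc (bD m) (bs i.rev), bs_bD, Fin.rev_rev]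
    simp only [mul_assoc]
  | mul a b ha hb =>
    rw [map_mul, ← mul_assoc, ha, mul_assoc, hb, mul_assoc]

/-- powers of `D²` -/
def bmS (m : ℕ) : Submonoid (BM m) := Submonoid.powers (bD m * bD m)

lemma bmS_comm {m : ℕ} (t : BM m) (ht : t ∈ bmS m) (X : BM m) : t * X = X * t := by
  obtain ⟨k, rfl⟩ := ht
  exact (Commute.pow_left (bm_comm_DD X) k : _)

instance bmOre (m : ℕ) : OreLocalization.OreSet (bmS m) where
  ore_right_cancel r₁ r₂ t h := ⟨t, by
    rw [bmS_comm _ t.2, bmS_comm _ t.2, h]⟩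
  oreNum r _ := r
  oreDenom _ t := t
  ore_eq r t := bmS_comm _ t.2 r

/-- localization -/
abbrev BLoc (m : ℕ) := OreLocalization (bmS m) (BM m)

/-- numerator map -/
def bnum (m : ℕ) : BM m →* BLoc m := OreLocalization.numeratorHom

lemma bnum_inj (m : ℕ) : Function.Injective (bnum m) := by
  intro p q h
  change OreLocalization.oreDiv p 1 = OreLocalization.oreDiv q 1 at h
  rw [OreLocalization.oreDiv_eq_iff] at h
  obtain ⟨u, v, h1, h2⟩ := h
  have h2' : (u : BM m) = v := by simpa using h2
  subst h2'
  exact (bm_cancel _ h1).symm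

lemma bnum_unit {m : ℕ} (i : Fin m) : IsUnit (bnum m (bs i)) := by
  obtain ⟨c, hc⟩ := bs_dvd_bD i
  have h1 : bs i * (c * bD m) = bD m * bD m := by rw [← mul_assoc, ← hc]
  have h2 : (c * bD m) * bs i = bD m * bD m := by
    apply bm_cancel (bs i)
    rw [← mul_assoc, h1, bm_comm_DD]
  have hu : IsUnit (bnum m (bD m * bD m)) :=
    OreLocalization.numerator_isUnit (⟨_, 1, pow_one _⟩ : bmS m)
  obtain ⟨u, hu⟩ := hu
  have h1' : bnum m (bs i) * bnum m (c * bD m) = u := by rw [← map_mul, h1, hu]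
  have h2' : bnum m (c * bD m) * bnum m (bs i) = u := by rw [← map_mul, h2, hu]
  refine isUnit_iff_exists.2 ⟨bnum m (c * bD m) * ↑u⁻¹, ?_, ?_⟩
  · rw [← mul_assoc, h1', Units.mul_inv]
  · have hr : bnum m (bs i) * (bnum m (c * bD m) * ↑u⁻¹) = 1 := by
      rw [← mul_assoc, h1', Units.mul_inv]
    have hl : (↑u⁻¹ * bnum m (c * bD m)) * bnum m (bs i) = 1 := by
      rw [mul_assoc, h2', Units.inv_mul]
    rw [← left_inv_eq_right_inv hl hr, hl]

variable {n : ℕ}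

lemma σ_comm {i j : Fin (n - 1)} (h : ¬ bmAdj i j) : σ i * σ j = σ j * (σ i : BraidGroup n) := by
  have main : ∀ i j : Fin (n - 1), (i : ℕ) + 1 < j → σ i * σ j = σ j * (σ i : BraidGroup n) := by
    intro i j hij
    have : PresentedGroup.mk (braidRels n) _ = 1 :=
      PresentedGroup.one_of_mem (rels := braidRels n) (Or.inl ⟨i, j, hij, rfl⟩)
    simp only [map_mul, map_inv] at this
    have := mul_inv_eq_iff_eq_mul.1 (mul_inv_eq_one.1 this)
    exact this
  rcases lt_trichotomy (i : ℕ) j with h1 | h1 | h1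
  · exact main i j (by unfold bmAdj at h; omega)
  · rw [Fin.ext h1]
  · exact (main j i (by unfold bmAdj at h; omega)).symm

lemma σ_braid {i j : Fin (n - 1)} (h : bmAdj i j) :
    σ i * (σ j * σ i) = σ j * (σ i * (σ j : BraidGroup n)) := by
  have main : ∀ i j : Fin (n - 1), (i : ℕ) + 1 = j →
      σ i * (σ j * σ i) = σ j * (σ i * (σ j : BraidGroup n)) := by
    intro i j hij
    have : PresentedGroup.mk (braidRels n) _ = 1 :=
      PresentedGroup.one_of_mem (rels := braidRels n) (Or.inr ⟨i, j, hij, rfl⟩)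
    rw [map_mul, map_inv] at this
    have := mul_inv_eq_one.1 this
    simp only [map_mul, mul_assoc] at this
    exact this
  rcases h with h1 | h1
  · exact main i j h1
  · exact (main j i h1).symm

/-- canonical map to the group -/
def bφ (n : ℕ) : BM (n - 1) →* BraidGroup n :=
  bmLift σ (fun _ _ h => σ_braid h) (fun _ _ h => σ_comm h)

lemma bφ_bs (i : Fin (n - 1)) : bφ n (bs i) = σ i := rfl

lemma braid_lift {G : Type*} [Group G] (f : Fin (n - 1) → G)
    (h1 : ∀ i j, bmAdj i j → f i * (f j * f i) = f j * (f i * f j))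
    (h2 : ∀ i j, ¬ bmAdj i j → f i * f j = f j * f i) :
    ∃ g : BraidGroup n →* G, ∀ i, g (σ i) = f i := by
  refine ⟨PresentedGroup.toGroup (f := f) ?_, fun i => PresentedGroup.toGroup.of _⟩
  rintro r (⟨i, j, hij, rfl⟩ | ⟨i, j, hij, rfl⟩)
  · simp only [map_mul, map_inv, FreeGroup.lift_apply_of]
    rw [h2 i j (by unfold bmAdj; omega)]
    group
  · simp only [map_mul, map_inv, FreeGroup.lift_apply_of]
    rw [mul_inv_eq_one, mul_assoc, h1 i j (Or.inl hij), mul_assoc]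

lemma bφ_inj (n : ℕ) : Function.Injective (bφ n) := by
  obtain ⟨g, hg⟩ := braid_lift (n := n) (fun i => (bnum_unit i).unit)
    (by
      intro i j h
      ext
      simp only [Units.val_mul, IsUnit.unit_spec, ← map_mul]
      rw [bs_braid h])
    (by
      intro i j h
      ext
      simp only [Units.val_mul, IsUnit.unit_spec, ← map_mul]
      rw [bs_comm h])
  have key : (Units.coeHom _).comp (g.comp (bφ n)) = bnum (n - 1) := by
    apply PresentedMonoid.ext
    intro i
    change ((g (σ i) : (BLoc (n - 1))ˣ) : BLoc (n - 1)) = bnum (n - 1) (bs i)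
    rw [hg]; rfl
  intro p q h
  apply bnum_inj
  rw [← key]
  simp [h]

lemma pos_iff {x : BraidGroup n} : IsPositive x ↔ ∃ X, bφ n X = x := by
  constructor
  · intro h
    have : positives n ≤ MonoidHom.mrange (bφ n) := by
      unfold positives
      rw [Submonoid.closure_le]
      rintro _ ⟨i, rfl⟩
      exact ⟨bs i, rfl⟩
    exact this h
  · rintro ⟨X, rfl⟩
    obtain ⟨X, rfl⟩ := PresentedMonoid.surjective_mk X
    induction X with
    | one => rw [map_one, map_one]; exact (positives n).one_mem
    | of i => exact Submonoid.subset_closure ⟨i, rfl⟩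
    | mul a b ha hb => rw [map_mul, map_mul]; exact (positives n).mul_mem ha hb

lemma dvd_iff {X Y : BM (n - 1)} : LeftDvd (bφ n X) (bφ n Y) ↔ X ∣ Y := by
  constructor
  · rintro ⟨p, hp, h⟩
    obtain ⟨P, rfl⟩ := pos_iff.1 hp
    rw [← map_mul] at h
    exact ⟨P, (bφ_inj n h).symm⟩
  · rintro ⟨P, rfl⟩
    exact ⟨bφ n P, pos_iff.2 ⟨P, rfl⟩, by rw [map_mul]⟩

lemma bφ_D : bφ n (bD (n - 1)) = Δ n := by
  have hs : ∀ i, bφ n (bs' (n - 1) i) = σ' n i := by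
    intro i
    unfold bs' σ'
    split_ifs
    · rfl
    · exact map_one _
  have hA : ∀ k, bφ n (gA (bs' (n - 1)) k) = gA (σ' n) k := by
    intro k
    induction k with
    | zero => rw [gA_zero, gA_zero, map_one]
    | succ k ih => rw [gA_succ, gA_succ, map_mul, ih, hs]
  have hD : ∀ k, bφ n (gD (bs' (n - 1)) k) = gD (σ' n) k := by
    intro k
    induction k with
    | zero => rw [gD_zero, gD_zero, map_one]
    | succ k ih => rw [gD_succ, gD_succ, map_mul, ih, hA]
  exact hD _

/-- Existence of weighted forms in the monoid. -/
lemma bm_wf {m : ℕ} (hm : 0 < m) (l : ℕ) : ∀ X : BM m, bl X ≤ l → ∃ (k : ℕ) (L : List (BM m)),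
    (∀ a ∈ L, a ∣ bD m ∧ a ≠ 1 ∧ a ≠ bD m) ∧
    L.IsChain (fun a b => ∀ a', a * a' = bD m → ∀ i, ¬ (bs i ∣ a' ∧ bs i ∣ b)) ∧
    X = bD m ^ k * L.prod := by
  have hbD : 0 < bl (bD m) := by
    obtain ⟨c, hc⟩ := bs_dvd_bD (⟨0, hm⟩ : Fin m)
    rw [hc, bl_mul, bl_bs]; omega
  induction l with
  | zero =>
    intro X hX
    exact ⟨0, [], by simp, by simp, by simpa using bl_eq_zero (by omega)⟩
  | succ l ih =>
    intro X hX
    rcases bm_cases X with rfl | ⟨i0, X', hX'⟩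
    · exact ⟨0, [], by simp, by simp, by simp⟩
    by_cases hD : bD m ∣ X
    · obtain ⟨Y, rfl⟩ := hD
      rw [bl_mul] at hX
      obtain ⟨k, L, h1, h2, h3⟩ := ih Y (by omega)
      exact ⟨k + 1, L, h1, h2, by rw [h3, pow_succ', mul_assoc]⟩
    classical
    let P : ℕ → Prop := fun t => ∃ a, a ∣ bD m ∧ a ∣ X ∧ bl a = t
    have hP0 : P 0 := ⟨1, one_dvd _, one_dvd _, bl_one⟩
    obtain ⟨a, ha1, ⟨Y, hY⟩, ha3⟩ := Nat.findGreatest_spec (P := P) (Nat.zero_le (bl (bD m))) hP0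
    have hmax : ∀ b, b ∣ bD m → b ∣ X → bl b ≤ bl a := by
      intro b hb1 hb2
      rw [ha3]
      apply Nat.le_findGreatest
      · obtain ⟨c, hc⟩ := hb1
        rw [hc, bl_mul]; omega
      · exact ⟨b, hb1, hb2, rfl⟩
    have ha1' : 1 ≤ bl a := by
      rw [← bl_bs i0]
      exact hmax _ (bs_dvd_bD _) ⟨_, hX'⟩
    have hweight : ∀ a', a * a' = bD m → ∀ i, ¬ (bs i ∣ a' ∧ bs i ∣ Y) := by
      rintro a' ha' i ⟨hi1, hi2⟩
      have := hmax (a * bs i) (by rw [← ha']; exact mul_dvd_mul_left _ hi1)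
        (by rw [hY]; exact mul_dvd_mul_left _ hi2)
      rw [bl_mul, bl_bs] at this
      omega
    have haD : a ≠ bD m := by
      rintro rfl; exact hD ⟨Y, hY⟩
    rw [hY, bl_mul] at hX
    obtain ⟨k, L, h1, h2, h3⟩ := ih Y (by omega)
    obtain rfl : k = 0 := by
      by_contra hk
      obtain ⟨k, rfl⟩ := Nat.exists_eq_succ_of_ne_zero hk
      obtain ⟨a', ha'⟩ := ha1
      rcases bm_cases a' with rfl | ⟨j, a'', rfl⟩
      · exact haD (by rw [ha', mul_one])
      · refine hweight _ ha'.symm j ⟨Dvd.intro _ rfl, (bs_dvd_bD j).trans ?_⟩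
        rw [h3, Nat.succ_eq_add_one, pow_succ', mul_assoc]
        exact Dvd.intro _ rfl
    rw [pow_zero, one_mul] at h3
    refine ⟨0, a :: L, ?_, ?_, ?_⟩
    · intro b hb
      rcases List.mem_cons.1 hb with rfl | hb
      · refine ⟨ha1, ?_, haD⟩
        rintro rfl
        rw [bl_one] at ha1'; omega
      · exact h1 b hb
    · rw [List.isChain_cons]
      refine ⟨?_, h2⟩
      intro b hb a' ha' i ⟨hi1, hi2⟩
      refine hweight a' ha' i ⟨hi1, hi2.trans ?_⟩
      rw [h3]
      cases L with
      | nil => simp at hb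
      | cons c L =>
        simp only [List.head?_cons, Option.mem_def, Option.some.injEq] at hb
        subst hb
        rw [List.prod_cons]
        exact Dvd.intro _ rfl
    · rw [pow_zero, one_mul, List.prod_cons, ← h3, hY]

end embed
/-! ### Garside structure in the group -/

section grp
variable {n : ℕ}

lemma pos_mul {p q : BraidGroup n} (hp : IsPositive p) (hq : IsPositive q) : IsPositive (p * q) :=
  (positives n).mul_mem hp hq

lemma pos_one : IsPositive (1 : BraidGroup n) := (positives n).one_mem

lemma pos_σ (i : Fin (n - 1)) : IsPositive (σ i : BraidGroup n) :=
  Submonoid.subset_closure ⟨i, rfl⟩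

lemma pos_Δ : IsPositive (Δ n) := pos_iff.2 ⟨_, bφ_D⟩

lemma σ_dvd_Δ (i : Fin (n - 1)) : LeftDvd (σ i) (Δ n) := by
  rw [← bφ_D, ← bφ_bs, dvd_iff]; exact bs_dvd_bD i

lemma σ_Δ (i : Fin (n - 1)) : σ i * Δ n = Δ n * σ i.rev := by
  rw [← bφ_D, ← bφ_bs, ← bφ_bs, ← map_mul, ← map_mul, bs_bD]

lemma τ_σ (i : Fin (n - 1)) : τ n (σ i) = σ i.rev := by
  have : ∃ f : BraidGroup n →* BraidGroup n, ∀ i : Fin (n - 1), f (σ i) = σ i.rev := by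
    refine ⟨(MulAut.conj (Δ n)⁻¹).toMonoidHom, fun i => ?_⟩
    simp [MulAut.conj_apply, mul_assoc, σ_Δ]
  exact Classical.epsilon_spec this i

lemma τ_eq (x : BraidGroup n) : τ n x = (Δ n)⁻¹ * x * Δ n := by
  have : τ n = (MulAut.conj (Δ n)⁻¹).toMonoidHom := by
    apply PresentedGroup.ext
    intro i
    refine (τ_σ i).trans ?_
    change _ = (Δ n)⁻¹ * σ i * ((Δ n)⁻¹)⁻¹
    rw [mul_assoc, inv_inv, σ_Δ, inv_mul_cancel_left]
  rw [this]
  simp [MulAut.conj_apply]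

lemma τ_τ (x : BraidGroup n) : τ n (τ n x) = x := by
  have : (τ n).comp (τ n) = MonoidHom.id _ := by
    apply PresentedGroup.ext
    intro i
    change τ n (τ n (σ i)) = σ i
    rw [τ_σ, τ_σ, Fin.rev_rev]
  exact DFunLike.congr_fun this x

lemma ΔΔ_comm (x : BraidGroup n) : Commute (Δ n * Δ n) x := by
  have := τ_τ x
  rw [τ_eq, τ_eq] at this
  unfold Commute SemiconjBy
  conv_lhs => rw [← this]
  group

lemma τpow_eq (u : ℤ) (x : BraidGroup n) : τpow u x = Δ n ^ u * x * Δ n ^ (-u) := by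
  have hc : ∀ r : ℤ, Δ n ^ (r + r) * x = x * Δ n ^ (r + r) := by
    intro r
    have : Δ n ^ (r + r) = (Δ n * Δ n) ^ r := by
      rw [(Commute.refl (Δ n)).mul_zpow, zpow_add]
    rw [this]
    exact (ΔΔ_comm x).zpow_left r
  unfold τpow
  split_ifs with h
  · obtain ⟨r, rfl⟩ := h
    rw [hc, mul_assoc, ← zpow_add, add_neg_cancel, zpow_zero, mul_one]
  · obtain ⟨r, rfl⟩ := Int.not_even_iff_odd.1 h
    have e1 : Δ n ^ (2 * r + 1) = (Δ n)⁻¹ * Δ n ^ ((r + 1) + (r + 1)) := by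
      rw [← zpow_neg_one, ← zpow_add]; congr 1; ring
    have e2 : Δ n ^ (-(2 * r + 1)) = Δ n ^ (-((r + 1) + (r + 1))) * Δ n := by
      rw [← zpow_add_one]; congr 1; ring
    rw [e1, e2, mul_assoc (Δ n)⁻¹, hc, τ_eq]
    simp only [mul_assoc]
    rw [zpow_neg, mul_inv_cancel_left]

lemma τpow_mul (u : ℤ) (x y : BraidGroup n) : τpow u (x * y) = τpow u x * τpow u y := by
  unfold τpow; split_ifs
  · rfl
  · exact map_mul _ _ _

lemma τpow_one (u : ℤ) : τpow u (1 : BraidGroup n) = 1 := by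
  unfold τpow; split_ifs
  · rfl
  · exact map_one _

lemma τpow_τpow (u : ℤ) (x : BraidGroup n) : τpow u (τpow u x) = x := by
  unfold τpow; split_ifs
  · rfl
  · exact τ_τ _

lemma τpow_σ (u : ℤ) (i : Fin (n - 1)) : ∃ j, τpow u (σ i : BraidGroup n) = σ j := by
  unfold τpow; split_ifs
  · exact ⟨i, rfl⟩
  · exact ⟨_, τ_σ i⟩

lemma τpow_pos (u : ℤ) {x : BraidGroup n} (hx : IsPositive x) : IsPositive (τpow u x) := by
  unfold IsPositive positives at hx
  induction hx using Submonoid.closure_induction with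
  | mem x hx =>
    obtain ⟨i, rfl⟩ := hx
    obtain ⟨j, hj⟩ := τpow_σ u i
    rw [hj]; exact pos_σ j
  | one => rw [τpow_one]; exact pos_one
  | mul x y _ _ hx hy => rw [τpow_mul]; exact pos_mul hx hy

lemma τpow_dvd (u : ℤ) {x y : BraidGroup n} (h : LeftDvd x y) :
    LeftDvd (τpow u x) (τpow u y) := by
  obtain ⟨p, hp, rfl⟩ := h
  exact ⟨τpow u p, τpow_pos u hp, by rw [τpow_mul]⟩

lemma dvd_mul_pos {x y p : BraidGroup n} (h : LeftDvd x y) (hp : IsPositive p) :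
    LeftDvd x (y * p) := by
  obtain ⟨q, hq, rfl⟩ := h
  exact ⟨q * p, pos_mul hq hp, by rw [mul_assoc]⟩

lemma σ_not_dvd_one (i : Fin (n - 1)) : ¬ LeftDvd (σ i : BraidGroup n) 1 := by
  rw [← map_one (bφ n), ← bφ_bs, dvd_iff]
  rintro ⟨c, hc⟩
  have := congrArg bl hc
  rw [bl_mul, bl_bs, bl_one] at this
  omega

lemma head_lemma {a a' b : BraidGroup n} (ha : IsPositive a) (ha' : IsPositive a')
    (hb : IsPositive b) (haa : a * a' = Δ n) (hw : ∀ j, ¬ (LeftDvd (σ j) a' ∧ LeftDvd (σ j) b))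
    (i : Fin (n - 1)) (h : LeftDvd (σ i) (a * b)) : LeftDvd (σ i) a := by
  obtain ⟨a, rfl⟩ := pos_iff.1 ha
  obtain ⟨a', rfl⟩ := pos_iff.1 ha'
  obtain ⟨b, rfl⟩ := pos_iff.1 hb
  have hd := σ_dvd_Δ i
  rw [← haa] at hd
  simp only [← map_mul, ← bφ_bs, dvd_iff] at hd h hw ⊢
  exact bm_head a a' b i hd h hw

lemma perm_compl {a : BraidGroup n} (ha : IsPermBraid a) : IsPositive (a⁻¹ * Δ n) := by
  obtain ⟨_, p, hp, h⟩ := ha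
  rw [← h, inv_mul_cancel_left]; exact hp

lemma prod_pos (L : List (BraidGroup n)) (hL : ∀ a ∈ L, IsPermBraid a) : IsPositive L.prod :=
  (positives n).list_prod_mem (fun a ha => (hL a ha).1)

lemma head_list (L : List (BraidGroup n)) (hL : ∀ a ∈ L, IsPermBraid a)
    (hc : L.IsChain IsLeftWeighted) (i : Fin (n - 1)) (h : LeftDvd (σ i) L.prod) :
    LeftDvd (σ i) (L.head?.getD 1) := by
  induction L generalizing i with
  | nil => simpa using h
  | cons a L ih =>
    rw [List.isChain_cons] at hc
    rw [List.prod_cons] at h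
    have hL' : ∀ b ∈ L, IsPermBraid b := fun b hb => hL b (List.mem_cons_of_mem _ hb)
    have haP := hL a List.mem_cons_self
    refine head_lemma haP.1 (perm_compl haP) (prod_pos L hL') (mul_inv_cancel_left _ _) ?_ i h
    rintro j ⟨h1, h2⟩
    have h3 := ih hL' hc.2 j h2
    cases L with
    | nil => exact σ_not_dvd_one j h3
    | cons b L => exact hc.1 b rfl j ⟨h1, h3⟩

lemma head_list' (L : List (BraidGroup n)) (hL : ∀ a ∈ L, IsPermBraid a)
    (i : Fin (n - 1)) (h : LeftDvd (σ i) (L.head?.getD 1)) : LeftDvd (σ i) L.prod := by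
  cases L with
  | nil => simpa using h
  | cons a L =>
    rw [List.prod_cons]
    exact dvd_mul_pos h (prod_pos L fun b hb => hL b (List.mem_cons_of_mem _ hb))

lemma compl_append (L : List (BraidGroup n)) (a : BraidGroup n) :
    (L ++ [a]).prod⁻¹ * Δ n ^ ((L ++ [a]).length : ℤ) =
      (a⁻¹ * Δ n) * τpow (-1) (L.prod⁻¹ * Δ n ^ (L.length : ℤ)) := by
  rw [τpow_eq, List.prod_append, List.prod_singleton, mul_inv_rev, List.length_append,
    List.length_singleton, Nat.cast_add, Nat.cast_one, zpow_add_one]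
  simp only [mul_assoc, zpow_neg_one, mul_inv_cancel_left, neg_neg, zpow_one]

lemma compl_pos (L : List (BraidGroup n)) (hL : ∀ a ∈ L, IsPermBraid a) :
    IsPositive (L.prod⁻¹ * Δ n ^ (L.length : ℤ)) := by
  induction L using List.reverseRecOn with
  | nil => simpa using pos_one
  | append_singleton L a ih =>
    rw [compl_append]
    exact pos_mul (perm_compl (hL a (by simp)))
      (τpow_pos _ (ih fun b hb => hL b (by simp [hb])))

lemma tail_list (L : List (BraidGroup n)) (hL : ∀ a ∈ L, IsPermBraid a)
    (hc : L.IsChain IsLeftWeighted) (hne : L ≠ []) (i : Fin (n - 1))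
    (h : LeftDvd (σ i) (L.prod⁻¹ * Δ n ^ (L.length : ℤ))) :
    LeftDvd (σ i) ((L.getLast?.getD 1)⁻¹ * Δ n) := by
  induction L using List.reverseRecOn generalizing i with
  | nil => exact absurd rfl hne
  | append_singleton L a ih =>
    rw [compl_append] at h
    rw [List.isChain_append] at hc
    have haP : IsPermBraid a := hL a (by simp)
    have hL' : ∀ b ∈ L, IsPermBraid b := fun b hb => hL b (by simp [hb])
    have e : (L ++ [a]).getLast?.getD 1 = a := by simp
    rw [e]
    refine head_lemma (a' := τpow (-1) a) (perm_compl haP) (τpow_pos _ haP.1)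
      (τpow_pos _ (compl_pos L hL')) ?_ ?_ i h
    · rw [τpow_eq]; group
    · rintro j ⟨h1, h2⟩
      have h1 := τpow_dvd (-1) h1
      have h2 := τpow_dvd (-1) h2
      obtain ⟨j', hj'⟩ := τpow_σ (n := n) (-1) j
      rw [hj', τpow_τpow] at h1 h2
      by_cases hLn : L = []
      · subst hLn
        simp only [List.prod_nil, inv_one, List.length_nil, Nat.cast_zero, zpow_zero,
          mul_one] at h2
        exact σ_not_dvd_one j' h2
      · have h3 := ih hL' hc.1 hLn j' h2
        obtain ⟨b, hb⟩ : ∃ b, L.getLast? = some b := ⟨_, List.getLast?_eq_some_getLast hLn⟩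
        rw [hb] at h3
        exact hc.2.2 b hb a (by simp) j' ⟨h3, h1⟩

lemma tail_list' (L : List (BraidGroup n)) (hL : ∀ a ∈ L, IsPermBraid a)
    (hne : L ≠ []) (i : Fin (n - 1)) (h : LeftDvd (σ i) ((L.getLast?.getD 1)⁻¹ * Δ n)) :
    LeftDvd (σ i) (L.prod⁻¹ * Δ n ^ (L.length : ℤ)) := by
  induction L using List.reverseRecOn with
  | nil => exact absurd rfl hne
  | append_singleton L a ih =>
    rw [compl_append]
    have e : (L ++ [a]).getLast?.getD 1 = a := by simp
    rw [e] at h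
    exact dvd_mul_pos h (τpow_pos _ (compl_pos L fun b hb => hL b (by simp [hb])))

lemma exists_pos (x : BraidGroup n) : ∃ k : ℕ, IsPositive (Δ n ^ k * x) := by
  obtain ⟨w, rfl⟩ := PresentedGroup.mk_surjective _ x
  have hinv : ∀ i : Fin (n - 1), IsPositive (Δ n * (σ i)⁻¹) := by
    intro i
    obtain ⟨p, hp, h⟩ := σ_dvd_Δ i.rev
    have e := σ_Δ i.rev
    rw [Fin.rev_rev] at e
    have : Δ n * (σ i)⁻¹ = p := by
      rw [mul_inv_eq_iff_eq_mul]
      apply mul_left_cancel (a := σ i.rev)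
      rw [e, ← mul_assoc, h]
    rw [this]; exact hp
  induction w using FreeGroup.induction_on with
  | C1 => exact ⟨0, by simpa using pos_one⟩
  | of i => exact ⟨0, by rw [pow_zero, one_mul]; exact pos_σ i⟩
  | inv_of i _ => exact ⟨1, by rw [pow_one, map_inv]; exact hinv i⟩
  | mul x y hx hy =>
    obtain ⟨k, hk⟩ := hx
    obtain ⟨l, hl⟩ := hy
    refine ⟨l + k, ?_⟩
    have := pos_mul (τpow_pos l hk) hl
    rw [τpow_eq] at this
    convert this using 1
    rw [map_mul, pow_add, zpow_neg, zpow_natCast]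
    simp only [mul_assoc, inv_mul_cancel_left]

lemma exists_wf (hn : 0 < n - 1) (x : BraidGroup n) :
    ∃ p : ℤ × List (BraidGroup n), IsWeightedForm p.1 p.2 x := by
  obtain ⟨k, hk⟩ := exists_pos x
  obtain ⟨X, hX⟩ := pos_iff.1 hk
  obtain ⟨l, L, h1, h2, h3⟩ := bm_wf hn _ X le_rfl
  refine ⟨(-(k : ℤ) + l, L.map (bφ n)), ?_, ?_, ?_⟩
  · intro a ha
    obtain ⟨A, hA, rfl⟩ := List.mem_map.1 ha
    obtain ⟨q1, q2, q3⟩ := h1 A hA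
    refine ⟨⟨pos_iff.2 ⟨A, rfl⟩, ?_⟩, ?_, ?_⟩
    · rw [← bφ_D, dvd_iff]; exact q1
    · intro h; exact q2 (bφ_inj n (by rw [h, map_one]))
    · intro h; exact q3 (bφ_inj n (by rw [h, bφ_D]))
  · change List.IsChain _ _
    rw [List.isChain_map]
    have h2' : L.IsChain (fun a b => a ∈ L ∧ b ∈ L ∧
        ∀ a', a * a' = bD (n - 1) → ∀ i, ¬ (bs i ∣ a' ∧ bs i ∣ b)) := by
      exact List.IsChain.iff_mem.1 h2
    refine h2'.imp ?_
    rintro a b ⟨ha, hb, hab⟩ i ⟨hi1, hi2⟩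
    obtain ⟨a', ha'⟩ := (h1 a ha).1
    rw [← bφ_D, ha', map_mul, inv_mul_cancel_left, ← bφ_bs, dvd_iff] at hi1
    rw [← bφ_bs, dvd_iff] at hi2
    exact hab a' ha'.symm i ⟨hi1, hi2⟩
  · change x = Δ n ^ (-(k : ℤ) + l) * (L.map (bφ n)).prod
    rw [← map_list_prod, zpow_add, zpow_neg, zpow_natCast, zpow_natCast, mul_assoc,
      eq_inv_mul_iff_mul_eq, ← hX, h3, map_mul, map_pow, bφ_D]

lemma wf_spec (hn : 0 < n - 1) (x : BraidGroup n) : IsWeightedForm (wf x).1 (wf x).2 x :=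
  Classical.epsilon_spec (p := fun p : ℤ × List (BraidGroup n) => IsWeightedForm p.1 p.2 x)
    (exists_wf hn x)

/-- The first factor of an iterated positive product. -/
lemma pow_dvd_aux (y : BraidGroup n) (s : ℤ) (hp : IsPositive (y * Δ n ^ s)) (N : ℕ) :
    IsPositive (y ^ N * Δ n ^ ((N : ℤ) * s)) ∧ (1 ≤ N → ∀ g, LeftDvd g (y * Δ n ^ s) →
      LeftDvd g (y ^ N * Δ n ^ ((N : ℤ) * s))) := by
  induction N with
  | zero => exact ⟨by simpa using pos_one, by intro h; omega⟩
  | succ N ih =>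
    have e : y ^ (N + 1) * Δ n ^ (((N + 1 : ℕ) : ℤ) * s) =
        (y * Δ n ^ s) * τpow (-s) (y ^ N * Δ n ^ ((N : ℤ) * s)) := by
      rw [τpow_eq, pow_succ', Nat.cast_add, Nat.cast_one, add_mul, one_mul, zpow_add]
      simp only [mul_assoc, neg_neg, zpow_neg, mul_inv_cancel_left]
    rw [e]
    exact ⟨pos_mul hp (τpow_pos _ ih.1), fun _ g hg => dvd_mul_pos hg (τpow_pos _ ih.1)⟩

end grp

/-- if `x ∈ SSS(x)`, `inf` and `sup` are additive on powers of `x`,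
and `x^N` is cyclically weighted for some `N ≥ 1`, then `x` is cyclically
weighted. -/
theorem cw_of_cw_power (n : ℕ) (x : BraidGroup n) (hx : x ∈ SSS x)
    (hadd : ∀ i : ℕ, 1 ≤ i →
      binf (x ^ i) = (i : ℤ) * binf x ∧ bsup (x ^ i) = (i : ℤ) * bsup x)
    (N : ℕ) (hN : 1 ≤ N) (hcw : IsCW (x ^ N)) :
    IsCW x := by
  intro i
  have hn : 0 < n - 1 := lt_of_le_of_lt (Nat.zero_le _) i.2
  rintro ⟨h1, h2⟩
  obtain ⟨a1, a2, a3⟩ := wf_spec hn x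
  obtain ⟨b1, b2, b3⟩ := wf_spec hn (x ^ N)
  obtain ⟨c1, c2⟩ := hadd N hN
  have a1' : ∀ a ∈ (wf x).2, IsPermBraid a := fun a ha => (a1 a ha).1
  have b1' : ∀ a ∈ (wf (x ^ N)).2, IsPermBraid a := fun a ha => (b1 a ha).1
  by_cases hne : (wf x).2 = []
  · unfold bhead at h2
    rw [hne] at h2
    simp only [List.head?_nil, Option.getD_none, τpow_one] at h2
    exact σ_not_dvd_one i h2
  have hlen : ((wf (x ^ N)).2.length : ℤ) = N * (wf x).2.length := by
    unfold bsup blen at c2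
    rw [c1] at c2
    linarith
  have hne' : (wf (x ^ N)).2 ≠ [] := by
    intro h
    rw [h] at hlen
    have h0 : 0 < (wf x).2.length := List.length_pos_iff.2 hne
    simp only [List.length_nil, Nat.cast_zero] at hlen
    have : (0 : ℤ) < N * (wf x).2.length := by positivity
    omega
  -- positive parts
  have hu : ∀ (y : BraidGroup n) (u : ℤ) (P : BraidGroup n), y = Δ n ^ u * P →
      y * Δ n ^ (-u) = τpow u P := by
    rintro y u P rfl
    rw [τpow_eq]
  have hs : ∀ (y : BraidGroup n) (u k : ℤ) (P : BraidGroup n), y = Δ n ^ u * P →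
      y⁻¹ * Δ n ^ (u + k) = P⁻¹ * Δ n ^ k := by
    rintro y u k P rfl
    rw [mul_inv_rev, zpow_add, mul_assoc, inv_mul_cancel_left]
  apply hcw i
  constructor
  · have t1 := tail_list' _ a1' hne i h1
    have t2 := compl_pos _ a1'
    rw [← hs x _ _ _ a3] at t1 t2
    have t3 := (pow_dvd_aux _ _ t2 N).2 hN _ t1
    refine tail_list _ b1' b2 hne' i ?_
    rw [← hs (x ^ N) _ _ _ b3]
    rw [inv_pow] at t3
    convert t3 using 3
    change binf (x ^ N) + _ = N * (binf x + _)
    rw [c1, hlen]; ring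
  · obtain ⟨j, hj⟩ := τpow_σ (n := n) (binf x) i
    have t0 := τpow_dvd (binf x) h2
    rw [τpow_τpow, hj] at t0
    have t1 := τpow_dvd (binf x) (head_list' _ a1' j t0)
    rw [← hj, τpow_τpow] at t1
    have t2 := τpow_pos (binf x) (prod_pos _ a1')
    have a3' : x = Δ n ^ binf x * (wf x).2.prod := a3
    have b3' : x ^ N = Δ n ^ binf (x ^ N) * (wf (x ^ N)).2.prod := b3
    rw [← hu x _ _ a3'] at t1 t2
    have t3 := (pow_dvd_aux _ _ t2 N).2 hN _ t1
    have e : (N : ℤ) * -(binf x) = -(binf (x ^ N)) := by rw [c1]; ring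
    rw [e, hu (x ^ N) _ _ b3'] at t3
    obtain ⟨l, hl⟩ := τpow_σ (n := n) (binf (x ^ N)) i
    have t4 := τpow_dvd (binf (x ^ N)) t3
    rw [τpow_τpow, hl] at t4
    have t5 := τpow_dvd (binf (x ^ N)) (head_list _ b1' b2 l t4)
    rw [← hl, τpow_τpow] at t5
    exact t5

end BraidGroup
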